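/- Let n ≥ 4, let k satisfy 3 ≤ k ≤ n−1, and let S ⊆ {0,…,n−1} with |S| = k (no aperiodicity assumption). For c ∈ ℂ^S, let x(c) ∈ ℂⁿ be the signal with x(c)_i = c_i for i ∈ S and x(c)_i = 0 otherwise. Then the set of c ∈ (ℂ\{0})^S for which there exists a signal x′ ∈ ℂⁿ with at most k nonzero entries whose autocorrelation equals that of x(c) and whose support {i : x′_i ≠ 0} is equal neither to {i + m : i ∈ S} for some m ∈ ℤ nor to {m − i : i ∈ S} for some m ∈ ℤ, has Lebesgue measure zero in ℂ^S ≅ ℂᵏ. (In words: for almost all value assignments, every sparsest solution with the same autocorrelation has support equal to a shift or a shifted reflection of S.) -/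

import Mathlib

open MeasureTheory

/-- Extension of a signal `x ∈ ℂⁿ` by zero to all of `ℤ`. -/
noncomputable def extZ {n : ℕ} (x : Fin n → ℂ) (i : ℤ) : ℂ :=
  if h : 0 ≤ i ∧ i < (n : ℤ) then x ⟨i.toNat, by omega⟩ else 0

/-- The autocorrelation of a signal `x ∈ ℂⁿ`:
`a_m = Σ_{j=0}^{n−1−m} x_j conj(x_{j+m})`. -/
noncomputable def autocorr {n : ℕ} (x : Fin n → ℂ) (m : ℕ) : ℂ :=
  ∑ j ∈ Finset.range (n - m), extZ x (j : ℤ) * (starRingEnd ℂ) (extZ x ((j : ℤ) + (m : ℤ)))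

/-- The signal of length `n` with values `c` on the support `S` and `0` elsewhere. -/
noncomputable def sigOn {n : ℕ} (S : Finset ℕ) (c : ↥S → ℂ) : Fin n → ℂ :=
  fun i => if h : (i : ℕ) ∈ S then c ⟨(i : ℕ), h⟩ else 0

/-- A finite support `S ⊆ ℕ`, viewed inside `ℤ`. -/
def suppZ (S : Finset ℕ) : Set ℤ := {z : ℤ | ∃ i ∈ S, (i : ℤ) = z}

/-!
Write `P` and `Q` for the generating polynomials of the two signals and `f*` for the conjugate
reciprocal of `f`. Equality of the autocorrelations means `P P* = Q Q*` up to a power of `X`, so by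
unique factorization, up to powers of `X` and units, `P = A B` and `Q = A B*` with `A` monic.

If `A` is constant, the supports of `P` and `Q` are reflections of each other. Otherwise take a root
`α` of `A` and move it to `1`: for generic values of the signal, `α` stays transcendental over the
coefficients of the rescaled `A` and of `B*`, so nothing cancels in `A B*` and its support is
`supp A + supp B*`. Since `P = A B` has `|S|` independent coefficients, `|supp A| + |supp B|` is at
least `|S| + 1`, hence `|supp A + supp B*| ≤ |S|` is the equality case of the integer sumset bound:
`supp A` and `supp B*` are arithmetic progressions with a common difference. Then `supp B` is a
translate of `supp B*`, and `Q` has the support of `P`.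
-/

section AdditiveCombinatorics

open scoped Pointwise

variable {α : Type*} [LinearOrder α] [AddCommMonoid α] [IsOrderedCancelAddMonoid α]
  {U V : Finset α}

-- Cauchy-Davenport below and above the two gaps leaves room for little of `U + V` in between.
lemma card_add_card_add_card_between_le {u u' : U} {v v' : V} (hu : u ⋖ u') (hv : v ⋖ v') :
    U.card + V.card + {x ∈ U + V | (u + v : α) < x ∧ x < u' + v'}.card ≤ (U + V).card + 2 := by
  have huu' : (u : α) < u' := hu.lt
  have hvv' : (v : α) < v' := hv.lt
  set U₁ := {x ∈ U | x ≤ (u : α)}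
  set U₂ := {x ∈ U | ¬ x ≤ (u : α)}
  set V₁ := {x ∈ V | x ≤ (v : α)}
  set V₂ := {x ∈ V | ¬ x ≤ (v : α)}
  set D := {x ∈ U + V | (u + v : α) < x ∧ x < u' + v'}
  have hlow : ∀ x ∈ U₁ + V₁, x ≤ u + v := fun x hx => by
    obtain ⟨a, ha, b, hb, rfl⟩ := Finset.mem_add.1 hx
    exact add_le_add (Finset.mem_filter.1 ha).2 (Finset.mem_filter.1 hb).2
  have hhigh : ∀ x ∈ U₂ + V₂, (u' + v' : α) ≤ x := fun x hx => by
    obtain ⟨a, ha, b, hb, rfl⟩ := Finset.mem_add.1 hx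
    obtain ⟨haU, hua⟩ := Finset.mem_filter.1 ha
    obtain ⟨hbV, hvb⟩ := Finset.mem_filter.1 hb
    exact add_le_add (not_lt.1 fun h => hua (hu.le_of_lt (c := ⟨a, haU⟩) h))
      (not_lt.1 fun h => hvb (hv.le_of_lt (c := ⟨b, hbV⟩) h))
  have hDhigh : Disjoint D (U₂ + V₂) := Finset.disjoint_left.2 fun x hx hx' =>
    ((Finset.mem_filter.1 hx).2.2.trans_le (hhigh x hx')).false
  have hlowD : Disjoint (U₁ + V₁) D := Finset.disjoint_left.2 fun x hx hx' =>
    ((Finset.mem_filter.1 hx').2.1.trans_le (hlow x hx)).false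
  have hlowhigh : Disjoint (U₁ + V₁) (U₂ + V₂) := Finset.disjoint_left.2 fun x hx hx' =>
    ((add_lt_add huu' hvv').trans_le ((hhigh x hx').trans (hlow x hx))).false
  have hcard : (U₁ + V₁).card + (D.card + (U₂ + V₂).card) ≤ (U + V).card := by
    rw [← Finset.card_union_of_disjoint hDhigh,
      ← Finset.card_union_of_disjoint (Finset.disjoint_union_right.2 ⟨hlowD, hlowhigh⟩)]
    exact Finset.card_le_card <| Finset.union_subset
      (Finset.add_subset_add (Finset.filter_subset _ _) (Finset.filter_subset _ _)) <|
      Finset.union_subset (Finset.filter_subset _ _)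
        (Finset.add_subset_add (Finset.filter_subset _ _) (Finset.filter_subset _ _))
  have hlow_cd := cauchy_davenport_add_of_linearOrder_isCancelAdd
    (⟨u, Finset.mem_filter.2 ⟨u.2, le_rfl⟩⟩ : U₁.Nonempty)
    (⟨v, Finset.mem_filter.2 ⟨v.2, le_rfl⟩⟩ : V₁.Nonempty)
  have hhigh_cd := cauchy_davenport_add_of_linearOrder_isCancelAdd
    (⟨u', Finset.mem_filter.2 ⟨u'.2, hu.lt.not_ge⟩⟩ : U₂.Nonempty)
    (⟨v', Finset.mem_filter.2 ⟨v'.2, hv.lt.not_ge⟩⟩ : V₂.Nonempty)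
  have hUcard : U₁.card + U₂.card = U.card := Finset.card_filter_add_card_filter_not _
  have hVcard : V₁.card + V₂.card = V.card := Finset.card_filter_add_card_filter_not _
  omega

lemma add_eq_add_of_covBy (hUV : (U + V).card < U.card + V.card) {u u' : U} {v v' : V}
    (hu : u ⋖ u') (hv : v ⋖ v') : (u' + v : α) = u + v' := by
  have huu' : (u : α) < u' := hu.lt
  have hvv' : (v : α) < v' := hv.lt
  have hbetween : {x ∈ U + V | (u + v : α) < x ∧ x < u' + v'}.card ≤ 1 := by
    have := card_add_card_add_card_between_le hu hv
    omega
  refine Finset.card_le_one.1 hbetween _ ?_ _ ?_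
  · exact Finset.mem_filter.2 ⟨Finset.add_mem_add u'.2 v.2, by gcongr, by gcongr⟩
  · exact Finset.mem_filter.2 ⟨Finset.add_mem_add u.2 v'.2, by gcongr, by gcongr⟩

-- Moving `v` one step up in `V` is compensated by moving its partner one step down, as all gaps of
-- `V` equal those of `U`.
lemma exists_add_eq_of_card_add_lt (hUV : (U + V).card < U.card + V.card) (hU : U.Nontrivial)
    {m M : V} (hm : IsBot m) (hM : IsTop M) (v : V) : ∃ w : V, (v + w : α) = m + M := by
  obtain ⟨a, ha, b, hb, hab⟩ := hU.exists_lt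
  obtain ⟨u, hu, -⟩ := exists_covBy_le_of_lt (Subtype.mk_lt_mk (hx := ha) (hy := hb).2 hab)
  induction v using WellFoundedLT.induction with
  | ind v ih =>
    rcases (hm v).eq_or_lt with rfl | hmv
    · exact ⟨M, rfl⟩
    obtain ⟨p, -, hpv⟩ := exists_le_covBy_of_lt hmv
    obtain ⟨w, hpw⟩ := ih p hpv.lt
    have hmw : m < w := (hm w).lt_of_ne fun hmw => by
      rw [← hmw, add_comm] at hpw
      exact (hpv.lt.trans_le (hM v)).ne (Subtype.ext (add_left_cancel hpw))
    obtain ⟨w', -, hww'⟩ := exists_le_covBy_of_lt hmw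
    refine ⟨w', hpw ▸ add_left_cancel (a := (a : α)) ?_⟩
    calc a + (v + w' : α) = u + p + w' := by
          rw [add_eq_add_of_covBy hUV hu hpv, add_assoc]
      _ = p + (u + w') := by ac_rfl
      _ = a + (p + w) := by rw [add_eq_add_of_covBy hUV hu hww']; ac_rfl

end AdditiveCombinatorics

open Polynomial

section AlgebraicHull

variable {K L : Type*} [Field K] [Field L] [Algebra K L]

variable (K) in
/-- The elements of `L` that are algebraic over `K(G)`, as a `K`-subalgebra of `L`. It is the
closure of `G` in `AlgebraicIndependent.matroid K L`. -/
noncomputable def algebraicHull (G : Set L) : Subalgebra K L :=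
  (Subalgebra.algebraicClosure (Algebra.adjoin K G) L).restrictScalars K

variable {G H : Set L}

lemma coe_algebraicHull :
    (algebraicHull K G : Set L) = (AlgebraicIndependent.matroid K L).closure G :=
  AlgebraicIndependent.matroid_closure_eq.symm

lemma subset_algebraicHull : G ⊆ algebraicHull K G := by
  rw [coe_algebraicHull]
  exact Matroid.subset_closure _ _

lemma algebraicHull_mono (h : G ⊆ H) : algebraicHull K G ≤ algebraicHull K H := by
  rw [← SetLike.coe_subset_coe, coe_algebraicHull, coe_algebraicHull]
  exact Matroid.closure_subset_closure _ h

lemma transcendental_of_notMem_algebraicHull {α : L} (hα : α ∉ algebraicHull K G) :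
    Transcendental (algebraicHull K G) α :=
  Transcendental.subalgebraAlgebraicClosure (R := Algebra.adjoin K G) hα

lemma mem_lifts_algebraicHull_iff {p : L[X]} :
    p ∈ lifts (algebraMap (algebraicHull K G) L) ↔ ∀ i, p.coeff i ∈ algebraicHull K G := by
  rw [lifts_iff_coeff_lifts]
  exact forall_congr' fun i => Set.ext_iff.1 Subtype.range_coe (p.coeff i)

lemma mem_lifts_algebraicHull_of_coeffs_subset {p : L[X]}
    (h : (p.coeffs : Set L) ⊆ algebraicHull K G) :
    p ∈ lifts (algebraMap (algebraicHull K G) L) := by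
  rw [lifts_iff_coeffs_subset_range]
  exact h.trans Subtype.range_coe.ge

lemma lifts_algebraicHull_mono (h : G ⊆ H) :
    lifts (algebraMap (algebraicHull K G) L) ≤ lifts (algebraMap (algebraicHull K H) L) :=
  fun _ hp => mem_lifts_algebraicHull_iff.2 fun i =>
    algebraicHull_mono h (mem_lifts_algebraicHull_iff.1 hp i)

lemma mem_algebraicHull_of_isRoot {p : L[X]} (hp : p ∈ lifts (algebraMap (algebraicHull K G) L))
    (hp0 : p ≠ 0) {α : L} (hα : p.IsRoot α) : α ∈ algebraicHull K G := by
  by_contra hmem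
  obtain ⟨q, rfl⟩ := hp
  refine hp0 ?_
  rw [(transcendental_iff.1 (transcendental_of_notMem_algebraicHull hmem)) q ?_, map_zero]
  rwa [aeval_def, ← eval_map]

lemma mem_lifts_algebraicHull_of_monic_of_dvd [IsAlgClosed L] {f g : L[X]} (hg : g.Monic)
    (hgf : g ∣ f) (hf : f ∈ lifts (algebraMap (algebraicHull K G) L)) (hf0 : f ≠ 0) :
    g ∈ lifts (algebraMap (algebraicHull K G) L) :=
  (IsAlgClosed.splits g).mem_lift_of_roots_mem_range hg _ fun _ hα =>
    ⟨⟨_, mem_algebraicHull_of_isRoot hf hf0 ((isRoot_of_mem_roots hα).dvd hgf)⟩, rfl⟩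

lemma card_le_card_of_algebraicIndependent_of_mem_algebraicHull {ι : Type*} [Fintype ι]
    {x : ι → L} (hx : AlgebraicIndependent K x) {G : Finset L}
    (hG : ∀ i, x i ∈ algebraicHull K (G : Set L)) : Fintype.card ι ≤ G.card := by
  set 𝓜 := AlgebraicIndependent.matroid K L
  have hindep : 𝓜.Indep (Set.range x) :=
    AlgebraicIndependent.matroid_indep_iff.2 hx.to_subtype_range
  have hsub : Set.range x ⊆ 𝓜.closure G := by
    rw [← coe_algebraicHull]
    exact Set.range_subset_iff.2 hG
  have hencard : (Set.range x).encard ≤ (G : Set L).encard :=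
    calc (Set.range x).encard = 𝓜.eRk (Set.range x) := hindep.eRk_eq_encard.symm
      _ ≤ 𝓜.eRk (𝓜.closure G) := 𝓜.eRk_mono hsub
      _ = 𝓜.eRk G := 𝓜.eRk_closure_eq G
      _ ≤ (G : Set L).encard := 𝓜.eRk_le_encard G
  rwa [← Set.image_univ, hx.injective.encard_image, Set.encard_univ,
    Set.encard_coe_eq_coe_finsetCard, ENat.card_eq_coe_fintype_card, Nat.cast_le] at hencard

end AlgebraicHull

section NoCancellation

open scoped Pointwise

lemma support_mul_subset_add {R : Type*} [Semiring R] (p q : R[X]) :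
    (p * q).support ⊆ p.support + q.support := fun t ht => by
  rw [mem_support_iff, coeff_mul] at ht
  obtain ⟨ij, hij, hne⟩ := Finset.exists_ne_zero_of_sum_ne_zero ht
  rw [← Finset.HasAntidiagonal.mem_antidiagonal.1 hij]
  exact Finset.add_mem_add (mem_support_iff.2 (left_ne_zero_of_mul hne))
    (mem_support_iff.2 (right_ne_zero_of_mul hne))

lemma support_C_mul_of_ne_zero {R : Type*} [Semiring R] [NoZeroDivisors R] {a : R} (ha : a ≠ 0)
    (p : R[X]) : (C a * p).support = p.support := by
  ext i
  rw [mem_support_iff, coeff_C_mul, mul_ne_zero_iff_left ha, mem_support_iff]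

variable {F L : Type*} [CommRing F] [NoZeroDivisors F] [CommRing L] [Algebra F L]

-- The `(i + j)`-th coefficient is a polynomial in `α` over `F`, whose coefficient of degree
-- `p.natDegree - i` is `p.coeff i * q.coeff j`.
lemma support_scaleRoots_mul_of_transcendental {α : L} (hα : Transcendental F α) (p q : F[X]) :
    ((p.map (algebraMap F L)).scaleRoots α * q.map (algebraMap F L)).support =
      p.support + q.support := by
  have hinj : Function.Injective (algebraMap F L) := by
    simpa only [Function.comp_def, aeval_C] using
      (transcendental_iff_injective.1 hα).comp C_injective
  refine Finset.Subset.antisymm ((support_mul_subset_add _ _).trans ?_) fun t ht => ?_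
  · exact Finset.add_subset_add ((support_scaleRoots_le _ _).trans (support_map_subset _ _))
      (support_map_subset _ _)
  obtain ⟨i, hi, j, hj, rfl⟩ := Finset.mem_add.1 ht
  set r : F[X] := ∑ x ∈ Finset.HasAntidiagonal.antidiagonal (i + j),
    monomial (p.natDegree - x.1) (p.coeff x.1 * q.coeff x.2) with hr
  have hcoeff : r.coeff (p.natDegree - i) = p.coeff i * q.coeff j := by
    rw [hr, finsetSum_coeff, Finset.sum_eq_single (i, j)]
    · rw [coeff_monomial, if_pos rfl]
    · rintro ⟨x, y⟩ hxy hne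
      rw [coeff_monomial, ite_eq_right_iff]
      intro hx
      by_contra hxy0
      have hxN := le_natDegree_of_ne_zero (left_ne_zero_of_mul hxy0)
      have hiN := le_natDegree_of_mem_supp i hi
      have hxi : x = i := by omega
      rw [Finset.HasAntidiagonal.mem_antidiagonal] at hxy
      exact hne (Prod.ext hxi (by simp only at hxy ⊢; omega))
    · exact fun h => (h (Finset.HasAntidiagonal.mem_antidiagonal.2 rfl)).elim
  have hr0 : r ≠ 0 := fun h0 => by
    rw [h0, coeff_zero] at hcoeff
    exact mul_ne_zero (mem_support_iff.1 hi) (mem_support_iff.1 hj) hcoeff.symm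
  have haeval : ((p.map (algebraMap F L)).scaleRoots α * q.map (algebraMap F L)).coeff (i + j) =
      aeval α r := by
    simp only [hr, coeff_mul, coeff_scaleRoots, coeff_map, map_sum, aeval_monomial, map_mul,
      natDegree_map_eq_of_injective hinj]
    exact Finset.sum_congr rfl fun x _ => by ring
  rw [mem_support_iff, haeval]
  exact fun h => hr0 (transcendental_iff.1 hα r h)

end NoCancellation

section ConjReverse

variable {R : Type*} [CommRing R] [StarRing R]

/-- The conjugate reciprocal polynomial `z ^ deg f * conj (f (1 / conj z))` of `f`. -/
noncomputable def conjReverse (f : R[X]) : R[X] :=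
  (f.map (starRingEnd R)).reverse

lemma natDegree_map_starRingEnd (f : R[X]) : (f.map (starRingEnd R)).natDegree = f.natDegree :=
  natDegree_map_eq_of_injective (starRingAut (R := R)).injective f

lemma coeff_conjReverse (f : R[X]) (i : ℕ) :
    (conjReverse f).coeff i = star (f.coeff (revAt f.natDegree i)) := by
  rw [conjReverse, coeff_reverse, natDegree_map_starRingEnd, coeff_map, starRingEnd_apply]

lemma support_conjReverse (f : R[X]) :
    (conjReverse f).support = f.support.image (revAt f.natDegree) := by
  ext i
  simp only [mem_support_iff, coeff_conjReverse, star_ne_zero, Finset.mem_image]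
  exact ⟨fun h => ⟨_, h, revAt_invol⟩, fun ⟨j, hj, hji⟩ => by rwa [← hji, revAt_invol]⟩

lemma card_support_conjReverse (f : R[X]) : (conjReverse f).support.card = f.support.card := by
  rw [support_conjReverse, Finset.card_image_of_injective _ (revAt _).injective]

lemma conjReverse_ne_zero {f : R[X]} (hf : f ≠ 0) : conjReverse f ≠ 0 := by
  rwa [← support_nonempty, ← Finset.card_pos, card_support_conjReverse, Finset.card_pos,
    support_nonempty]

lemma coeff_zero_conjReverse_ne_zero {f : R[X]} (hf : f ≠ 0) : (conjReverse f).coeff 0 ≠ 0 := by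
  rw [coeff_conjReverse, revAt_le (Nat.zero_le _), Nat.sub_zero]
  exact star_ne_zero.2 (leadingCoeff_ne_zero.2 hf)

lemma natDegree_conjReverse {f : R[X]} (hf : f.coeff 0 ≠ 0) :
    (conjReverse f).natDegree = f.natDegree := by
  have htrail : (f.map (starRingEnd R)).natTrailingDegree = 0 := by
    rw [natTrailingDegree_eq_zero, coeff_map, starRingEnd_apply]
    exact Or.inr (star_ne_zero.2 hf)
  rw [conjReverse, reverse_natDegree, htrail, natDegree_map_starRingEnd, Nat.sub_zero]

lemma conjReverse_C (a : R) : conjReverse (C a) = C (star a) := by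
  rw [conjReverse, map_C, reverse_C, starRingEnd_apply]

lemma conjReverse_X_pow_mul (f : R[X]) (n : ℕ) : conjReverse (X ^ n * f) = conjReverse f := by
  rw [conjReverse, Polynomial.map_mul, Polynomial.map_pow, map_X, reverse_X_pow_mul, conjReverse]

lemma conjReverse_mul [NoZeroDivisors R] (f g : R[X]) :
    conjReverse (f * g) = conjReverse f * conjReverse g := by
  rw [conjReverse, Polynomial.map_mul, reverse_mul_of_domain, conjReverse, conjReverse]

end ConjReverse

section Factorization

lemma exists_eq_X_pow_mul_coeff_zero_ne_zero {R : Type*} [CommRing R] {f : R[X]}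
    (hf : f ≠ 0) : ∃ (v : ℕ) (g : R[X]), f = X ^ v * g ∧ g.coeff 0 ≠ 0 := by
  obtain ⟨g, hfg, hdvd⟩ := exists_eq_pow_rootMultiplicity_mul_and_not_dvd f hf 0
  rw [map_zero, sub_zero] at hfg hdvd
  exact ⟨_, g, hfg, fun h => hdvd (X_dvd_iff.2 h)⟩

lemma eq_of_X_pow_mul_eq {R : Type*} [CommRing R] {f g : R[X]} (hf : f.coeff 0 ≠ 0)
    (hg : g.coeff 0 ≠ 0) {i j : ℕ} (h : X ^ i * f = X ^ j * g) : f = g := by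
  wlog hij : i ≤ j generalizing f g i j
  · exact (this hg hf h.symm (not_le.1 hij).le).symm
  obtain ⟨k, rfl⟩ := Nat.exists_eq_add_of_le hij
  have hfg : f = X ^ k * g := by
    rw [pow_add, mul_assoc] at h
    exact (isRegular_X_pow i).left h
  rcases k.eq_zero_or_pos with rfl | hk
  · rw [hfg, pow_zero, one_mul]
  · rw [hfg, coeff_X_pow_mul', if_neg hk.not_ge] at hf
    exact (hf rfl).elim

variable {k : Type*} [Field k] [StarRing k]

lemma associated_conjReverse_of_isRelPrime {f g : k[X]} (hfg : IsRelPrime f g)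
    (hf : f.coeff 0 ≠ 0) (hg : g.coeff 0 ≠ 0)
    (h : f * conjReverse f = g * conjReverse g) : Associated (conjReverse f) g := by
  have hf0 : f ≠ 0 := fun h => hf (by rw [h, coeff_zero])
  have hg0 : g ≠ 0 := fun h => hg (by rw [h, coeff_zero])
  have hdeg : (conjReverse f).natDegree ≤ g.natDegree := by
    have := congrArg natDegree h
    rw [natDegree_mul hf0 (conjReverse_ne_zero hf0), natDegree_mul hg0 (conjReverse_ne_zero hg0),
      natDegree_conjReverse hf, natDegree_conjReverse hg] at this
    rw [natDegree_conjReverse hf]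
    omega
  exact (associated_of_dvd_of_natDegree_le (hfg.symm.dvd_of_dvd_mul_left ⟨_, h⟩)
    (conjReverse_ne_zero hf0) hdeg).symm

lemma exists_monic_factor_of_mul_conjReverse_eq {P Q : k[X]} (hP : P.coeff 0 ≠ 0)
    (hQ : Q.coeff 0 ≠ 0) (h : P * conjReverse P = Q * conjReverse Q) :
    ∃ A B : k[X], ∃ u : k, A.Monic ∧ u ≠ 0 ∧ P = A * B ∧ Q = C u * (A * conjReverse B) := by
  have hP0 : P ≠ 0 := fun h => hP (by rw [h, coeff_zero])
  obtain ⟨f, g, D, hfg, rfl, rfl⟩ := UniqueFactorizationMonoid.exists_reduced_factors P hP0 Q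
  have hD0 : D ≠ 0 := left_ne_zero_of_mul hP0
  rw [mul_coeff_zero] at hP hQ
  have hfgconj : f * conjReverse f = g * conjReverse g := by
    refine mul_left_cancel₀ (mul_ne_zero hD0 (conjReverse_ne_zero hD0)) ?_
    rw [conjReverse_mul, conjReverse_mul] at h
    linear_combination h
  obtain ⟨w, hw⟩ := associated_conjReverse_of_isRelPrime hfg (right_ne_zero_of_mul hP)
    (right_ne_zero_of_mul hQ) hfgconj
  obtain ⟨e, he, hew⟩ := Polynomial.isUnit_iff.1 w.isUnit
  set l := D.leadingCoeff
  have hl : l ≠ 0 := leadingCoeff_ne_zero.2 hD0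
  refine ⟨D * C l⁻¹, C l * f, l * (star l)⁻¹ * e, monic_mul_leadingCoeff_inv hD0, ?_, ?_, ?_⟩
  · exact mul_ne_zero (mul_ne_zero hl (inv_ne_zero (star_ne_zero.2 hl))) he.ne_zero
  · rw [mul_assoc, ← mul_assoc (C _), ← C_mul, inv_mul_cancel₀ hl, C_1, one_mul]
  · have hscalar : (C (l * (star l)⁻¹ * e) * C l⁻¹ * C (star l) : k[X]) = C e := by
      rw [← C_mul, ← C_mul]
      congr 1
      have := star_ne_zero.2 hl
      field_simp
    rw [conjReverse_mul, conjReverse_C, ← hw, ← hew]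
    linear_combination (-(D * conjReverse f)) * hscalar

end Factorization

section Genericity

open scoped Pointwise

variable {K L : Type*} [Field K] [Field L] [Algebra K L]

lemma card_support_mul_lt_of_algebraicIndependent {A B : L[X]} (hA : A.Monic)
    (hAB : AlgebraicIndependent K fun i : (A * B).support => (A * B).coeff i) :
    (A * B).support.card < A.support.card + B.support.card := by
  classical
  set G : Finset L := A.coeffs.erase 1 ∪ B.coeffs
  have hGA : A ∈ lifts (algebraMap (algebraicHull K (G : Set L)) L) := by
    refine mem_lifts_algebraicHull_of_coeffs_subset fun a ha => ?_
    rcases eq_or_ne a 1 with rfl | ha1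
    · exact one_mem _
    · exact subset_algebraicHull (Finset.mem_union_left _ (Finset.mem_erase.2 ⟨ha1, ha⟩))
  have hGB : B ∈ lifts (algebraMap (algebraicHull K (G : Set L)) L) :=
    mem_lifts_algebraicHull_of_coeffs_subset fun b hb =>
      subset_algebraicHull (Finset.mem_union_right _ hb)
  have hcard := card_le_card_of_algebraicIndependent_of_mem_algebraicHull hAB fun i =>
    mem_lifts_algebraicHull_iff.1 (mul_mem hGA hGB) i
  have hone : 1 ∈ A.coeffs := mem_coeffs_iff.2
    ⟨A.natDegree, natDegree_mem_support_of_nonzero hA.ne_zero, hA.coeff_natDegree.symm⟩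
  calc (A * B).support.card ≤ G.card := by rwa [Fintype.card_coe] at hcard
    _ ≤ (A.coeffs.erase 1).card + B.coeffs.card := Finset.card_union_le _ _
    _ < A.coeffs.card + B.coeffs.card :=
      Nat.add_lt_add_right (Finset.card_erase_lt_of_mem hone) _
    _ ≤ A.support.card + B.support.card := add_le_add Finset.card_image_le Finset.card_image_le

lemma coeff_mem_of_eval_one_mem {R : Type*} [Ring R] {H : AddSubgroup R} {p : R[X]}
    (h1 : p.eval 1 ∈ H) (j : ℕ) (hj : ∀ i ≠ j, p.coeff i ∈ H) (i : ℕ) : p.coeff i ∈ H := by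
  rcases ne_or_eq i j with hij | rfl
  · exact hj i hij
  have herase : (p.erase i).eval 1 ∈ H := by
    rw [eval_eq_sum, sum_def]
    refine sum_mem fun x hx => ?_
    rw [support_erase, Finset.mem_erase] at hx
    rw [one_pow, mul_one, Polynomial.erase_ne p hx.1]
    exact hj x hx.1
  rw [← monomial_add_erase p i, eval_add, eval_monomial, one_pow, mul_one] at h1
  exact (H.add_mem_cancel_right herase).1 h1

-- The leading coefficient is `1`, and the constant coefficient is determined by the others.
lemma exists_finset_mem_lifts_algebraicHull {M : L[X]} (hM : M.Monic) (h0 : M.coeff 0 ≠ 0)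
    (h1 : M.IsRoot 1) :
    ∃ G : Finset L, G.card + 2 ≤ M.support.card ∧
      M ∈ lifts (algebraMap (algebraicHull K (G : Set L)) L) := by
  classical
  set N := M.natDegree with hN
  set G : Finset L := ((M.support.erase N).erase 0).image M.coeff
  refine ⟨G, ?_, mem_lifts_algebraicHull_iff.2 <| coeff_mem_of_eval_one_mem
    (H := (algebraicHull K (G : Set L)).toSubring.toAddSubgroup)
    (h1.eq_zero ▸ zero_mem _) 0 fun i hi => ?_⟩
  · have hN0 : 0 ≠ N := fun hN0 => by
      rw [eq_one_of_monic_natDegree_zero hM hN0.symm] at h1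
      exact one_ne_zero (eval_one.symm.trans h1)
    have hNmem : N ∈ M.support := natDegree_mem_support_of_nonzero hM.ne_zero
    have h0mem : 0 ∈ M.support.erase N := Finset.mem_erase.2 ⟨hN0, mem_support_iff.2 h0⟩
    rw [← Finset.card_erase_add_one hNmem, ← Finset.card_erase_add_one h0mem, add_assoc]
    exact Nat.add_le_add_right Finset.card_image_le 2
  · change M.coeff i ∈ algebraicHull K (G : Set L)
    rcases eq_or_ne i N with rfl | hiN
    · rw [hM.coeff_natDegree]
      exact one_mem _
    rcases eq_or_ne (M.coeff i) 0 with h | h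
    · rw [h]
      exact zero_mem _
    · exact subset_algebraicHull <| Finset.mem_image_of_mem _ <|
        Finset.mem_erase.2 ⟨hi, Finset.mem_erase.2 ⟨hiN, mem_support_iff.2 h⟩⟩

variable [StarRing L]

variable (K) in
/-- The family `c` together with its conjugates is algebraically independent over `K`: this is the
genericity condition on the values of a signal. -/
def ConjAlgebraicIndependent {ι : Type*} (c : ι → L) : Prop :=
  AlgebraicIndependent K (Sum.elim c (star ∘ c))

lemma ConjAlgebraicIndependent.comp {ι κ : Type*} {c : ι → L} (hc : ConjAlgebraicIndependent K c)
    {f : κ → ι} (hf : Function.Injective f) : ConjAlgebraicIndependent K (c ∘ f) := by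
  have h := AlgebraicIndependent.comp hc (Sum.map f f) (Sum.map_injective.2 ⟨hf, hf⟩)
  rwa [Sum.elim_comp_map] at h

lemma ConjAlgebraicIndependent.algebraicIndependent {ι : Type*} {c : ι → L}
    (hc : ConjAlgebraicIndependent K c) : AlgebraicIndependent K c :=
  AlgebraicIndependent.comp hc Sum.inl Sum.inl_injective

lemma notMem_algebraicHull_of_card_add_one_lt {P M : L[X]} {l α : L}
    (hP : ConjAlgebraicIndependent K fun i : P.support => P.coeff i)
    (hPM : P = C l * M.scaleRoots α) {G : Finset L}
    (hMG : M ∈ lifts (algebraMap (algebraicHull K (G : Set L)) L))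
    (hPG : conjReverse P ∈ lifts (algebraMap (algebraicHull K (G : Set L)) L))
    (hG : G.card + 1 < 2 * P.support.card) : α ∉ algebraicHull K (G : Set L) := fun hα => by
  classical
  have hsub : (G : Set L) ⊆ (insert l G : Finset L) :=
    Finset.coe_subset.2 (Finset.subset_insert _ _)
  have hl : l ∈ algebraicHull K ((insert l G : Finset L) : Set L) :=
    subset_algebraicHull (Finset.mem_insert_self _ _)
  have hcard : Fintype.card (P.support ⊕ P.support) ≤ (insert l G).card := by
    refine card_le_card_of_algebraicIndependent_of_mem_algebraicHull hP
      (Sum.rec (fun i => ?_) fun i => ?_)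
    · rw [Sum.elim_inl, congrArg (coeff · i) hPM, coeff_C_mul, coeff_scaleRoots]
      exact mul_mem hl <| algebraicHull_mono hsub <|
        mul_mem (mem_lifts_algebraicHull_iff.1 hMG _) (pow_mem hα _)
    · rw [Sum.elim_inr, Function.comp_apply, ← revAt_invol (N := P.natDegree) (i := i),
        ← coeff_conjReverse]
      exact algebraicHull_mono hsub (mem_lifts_algebraicHull_iff.1 hPG _)
  rw [Fintype.card_sum, Fintype.card_coe] at hcard
  have := Finset.card_insert_le l G
  omega

-- Dividing by the leading coefficient and moving the root `α` to `1` fixes two coefficients of `P`,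
-- so there are not enough others for `α` to be algebraic over them.
lemma exists_notMem_algebraicHull_of_isRoot {P : L[X]}
    (hP : ConjAlgebraicIndependent K fun i : P.support => P.coeff i) (hP0 : P.coeff 0 ≠ 0)
    {α : L} (hα : P.IsRoot α) :
    ∃ G : Set L, α ∉ algebraicHull K G ∧
      (P * C P.leadingCoeff⁻¹).scaleRoots α⁻¹ ∈ lifts (algebraMap (algebraicHull K G) L) ∧
      conjReverse P ∈ lifts (algebraMap (algebraicHull K G) L) := by
  classical
  have hPne : P ≠ 0 := fun h => hP0 (by rw [h, coeff_zero])
  have hl : P.leadingCoeff ≠ 0 := leadingCoeff_ne_zero.2 hPne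
  have hα0 : α ≠ 0 := by
    rintro rfl
    exact hP0 (coeff_zero_eq_eval_zero P ▸ hα)
  set M := (P * C P.leadingCoeff⁻¹).scaleRoots α⁻¹ with hM
  have hMmonic : M.Monic := (monic_scaleRoots_iff _).2 (monic_mul_leadingCoeff_inv hPne)
  have hM1 : M.IsRoot 1 := by
    rw [IsRoot, hM, ← inv_mul_cancel₀ hα0, scaleRoots_eval_mul, eval_mul, hα.eq_zero, zero_mul,
      mul_zero]
  have hPM : P = C P.leadingCoeff * M.scaleRoots α := by
    rw [hM, ← scaleRoots_mul, inv_mul_cancel₀ hα0, scaleRoots_one, mul_left_comm, ← C_mul,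
      mul_inv_cancel₀ hl, C_1, mul_one]
  have hMsupp : M.support = P.support := by
    rw [hM, support_scaleRoots_eq _ (isUnit_iff_ne_zero.2 (inv_ne_zero hα0)).mem_nonZeroDivisors,
      mul_comm, support_C_mul_of_ne_zero (inv_ne_zero hl)]
  obtain ⟨G, hGcard, hMG⟩ := exists_finset_mem_lifts_algebraicHull (K := K) hMmonic
    (mem_support_iff.1 (hMsupp ▸ mem_support_iff.2 hP0)) hM1
  have hMG' : M ∈ lifts (algebraMap (algebraicHull K ((G ∪ (conjReverse P).coeffs : Finset L) :
      Set L)) L) := lifts_algebraicHull_mono (Finset.coe_subset.2 Finset.subset_union_left) hMG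
  have hPG : conjReverse P ∈ lifts (algebraMap (algebraicHull K
      ((G ∪ (conjReverse P).coeffs : Finset L) : Set L)) L) :=
    mem_lifts_algebraicHull_of_coeffs_subset fun a ha =>
      subset_algebraicHull (Finset.mem_union_right _ ha)
  refine ⟨_, notMem_algebraicHull_of_card_add_one_lt hP hPM hMG' hPG ?_, hMG', hPG⟩
  have hunion := Finset.card_union_le G (conjReverse P).coeffs
  have hcoeffs : (conjReverse P).coeffs.card ≤ _ := Finset.card_image_le
  rw [card_support_conjReverse] at hcoeffs
  rw [hMsupp] at hGcard
  omega

end Genericity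

section SupportRigidity

open scoped Pointwise

lemma support_mul_eq_add_of_notMem_algebraicHull {K L : Type*} [Field K] [Field L] [Algebra K L]
    {G : Set L} {α : L} (hα : α ∉ algebraicHull K G) {f g : L[X]}
    (hf : f.scaleRoots α⁻¹ ∈ lifts (algebraMap (algebraicHull K G) L))
    (hg : g ∈ lifts (algebraMap (algebraicHull K G) L)) :
    (f * g).support = f.support + g.support := by
  have hα0 : α ≠ 0 := fun h => hα (h ▸ zero_mem _)
  have hinj : Function.Injective (algebraMap (algebraicHull K G) L) := Subtype.val_injective
  obtain ⟨p, hp⟩ := hf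
  obtain ⟨q, rfl⟩ := hg
  obtain rfl : (p.map (algebraMap _ L)).scaleRoots α = f := by
    rw [← coe_mapRingHom, hp, ← scaleRoots_mul, inv_mul_cancel₀ hα0, scaleRoots_one]
  rw [coe_mapRingHom, support_scaleRoots_mul_of_transcendental
    (transcendental_of_notMem_algebraicHull hα), support_map_of_injective q hinj,
    support_scaleRoots_eq _ (isUnit_iff_ne_zero.2 hα0).mem_nonZeroDivisors,
    support_map_of_injective p hinj]

lemma support_conjReverse_eq_of_card_add_lt {R : Type*} [CommRing R] [StarRing R] {f : R[X]}
    (hf : f.coeff 0 ≠ 0) {U : Finset ℕ} (hU : U.Nontrivial)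
    (hlt : (U + (conjReverse f).support).card < U.card + f.support.card) :
    (conjReverse f).support = f.support := by
  have hf0 : f ≠ 0 := fun h => hf (by rw [h, coeff_zero])
  rw [← card_support_conjReverse f] at hlt
  refine Finset.eq_of_subset_of_card_le (fun v hv => ?_) (card_support_conjReverse f).ge
  obtain ⟨⟨w, hw⟩, hvw⟩ := exists_add_eq_of_card_add_lt hlt hU
    (m := ⟨0, mem_support_iff.2 (coeff_zero_conjReverse_ne_zero hf0)⟩)
    (M := ⟨_, natDegree_mem_support_of_nonzero (conjReverse_ne_zero hf0)⟩)
    (fun _ => Nat.zero_le _) (fun x => le_natDegree_of_mem_supp _ x.2) ⟨v, hv⟩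
  simp only [zero_add, natDegree_conjReverse hf] at hvw
  rw [support_conjReverse, Finset.mem_image] at hw
  obtain ⟨b, hb, rfl⟩ := hw
  have hbdeg := le_natDegree_of_mem_supp b hb
  rw [revAt_le hbdeg] at hvw
  obtain rfl : v = b := by omega
  exact hb

variable {K L : Type*} [Field K] [Field L] [IsAlgClosed L] [StarRing L] [Algebra K L]

lemma support_mul_conjReverse_eq_add {A B : L[X]} (hA : A.Monic) (hA0 : A.natDegree ≠ 0)
    (hAB0 : (A * B).coeff 0 ≠ 0)
    (hAB : ConjAlgebraicIndependent K fun i : (A * B).support => (A * B).coeff i) :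
    (A * conjReverse B).support = A.support + (conjReverse B).support := by
  have hABne : A * B ≠ 0 := fun h => hAB0 (by rw [h, coeff_zero])
  have hB : conjReverse B ≠ 0 := conjReverse_ne_zero (right_ne_zero_of_mul hABne)
  have hl : (conjReverse B).leadingCoeff⁻¹ ≠ 0 := inv_ne_zero (leadingCoeff_ne_zero.2 hB)
  have hl' : (A * B).leadingCoeff⁻¹ ≠ 0 := inv_ne_zero (leadingCoeff_ne_zero.2 hABne)
  obtain ⟨α, hα⟩ := IsAlgClosed.exists_root A fun h => hA0 (natDegree_eq_of_degree_eq_some h)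
  obtain ⟨G, hαG, hscale, hconj⟩ :=
    exists_notMem_algebraicHull_of_isRoot hAB hAB0 (hα.dvd (dvd_mul_right A B))
  have hAG : A.scaleRoots α⁻¹ ∈ lifts (algebraMap (algebraicHull K G) L) :=
    mem_lifts_algebraicHull_of_monic_of_dvd ((monic_scaleRoots_iff _).2 hA)
      (scaleRoots_dvd _ _ ((dvd_mul_right A B).mul_right _)) hscale
      (scaleRoots_ne_zero (mul_ne_zero hABne (C_ne_zero.2 hl')) _)
  have hBG : conjReverse B * C (conjReverse B).leadingCoeff⁻¹ ∈
      lifts (algebraMap (algebraicHull K G) L) := by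
    refine mem_lifts_algebraicHull_of_monic_of_dvd (monic_mul_leadingCoeff_inv hB) ?_ hconj
      (conjReverse_ne_zero hABne)
    rw [conjReverse_mul, (isUnit_C.2 hl.isUnit).mul_right_dvd]
    exact dvd_mul_left _ _
  have hsupp := support_mul_eq_add_of_notMem_algebraicHull hαG hAG hBG
  rwa [mul_comm (conjReverse B), mul_left_comm, support_C_mul_of_ne_zero hl,
    support_C_mul_of_ne_zero hl] at hsupp

lemma support_mul_conjReverse_eq {A B : L[X]} (hA : A.Monic) (hA0 : A.natDegree ≠ 0)
    (hAB0 : (A * B).coeff 0 ≠ 0)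
    (hAB : ConjAlgebraicIndependent K fun i : (A * B).support => (A * B).coeff i)
    (hcard : (A * conjReverse B).support.card ≤ (A * B).support.card) :
    (A * conjReverse B).support = (A * B).support := by
  rw [mul_coeff_zero] at hAB0
  have hB0 : B.coeff 0 ≠ 0 := right_ne_zero_of_mul hAB0
  have hadd := support_mul_conjReverse_eq_add hA hA0 (by rwa [mul_coeff_zero]) hAB
  have hlt : (A.support + (conjReverse B).support).card <
      A.support.card + B.support.card := by
    rw [← hadd]
    exact hcard.trans_lt (card_support_mul_lt_of_algebraicIndependent hA hAB.algebraicIndependent)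
  have hnontrivial : A.support.Nontrivial :=
    ⟨0, mem_support_iff.2 (left_ne_zero_of_mul hAB0), A.natDegree,
      natDegree_mem_support_of_nonzero hA.ne_zero, hA0.symm⟩
  have hsymm : (conjReverse B).support = B.support :=
    support_conjReverse_eq_of_card_add_lt hB0 hnontrivial hlt
  rw [hsymm] at hadd
  exact (Finset.eq_of_subset_of_card_le (hadd ▸ support_mul_subset_add A B) hcard).symm

end SupportRigidity

section SupportRecovery

/-- `T` is a translate of `S` or of its mirror image `-S`. -/
def IsShiftOrReflection (S T : Set ℤ) : Prop :=
  (∃ m : ℤ, T = (fun i => i + m) '' S) ∨ ∃ m : ℤ, T = (fun i => m - i) '' S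

lemma IsShiftOrReflection.of_eq {S T : Set ℤ} (h : T = S) : IsShiftOrReflection S T :=
  Or.inl ⟨0, by simp only [h, add_zero, Set.image_id']⟩

lemma IsShiftOrReflection.image_add_right {S T : Set ℤ} (h : IsShiftOrReflection S T) (v w : ℤ) :
    IsShiftOrReflection ((fun i => i + v) '' S) ((fun i => i + w) '' T) := by
  rcases h with ⟨m, rfl⟩ | ⟨m, rfl⟩
  · refine Or.inl ⟨m + w - v, ?_⟩
    rw [Set.image_image, Set.image_image]
    exact Set.image_congr fun i _ => by ring
  · refine Or.inr ⟨m + w + v, ?_⟩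
    rw [Set.image_image, Set.image_image]
    exact Set.image_congr fun i _ => by ring

lemma support_X_pow_mul {R : Type*} [Semiring R] (v : ℕ) (f : R[X]) :
    (X ^ v * f).support = f.support.map (addRightEmbedding v) := by
  ext i
  simp only [mem_support_iff, coeff_X_pow_mul', Finset.mem_map, addRightEmbedding_apply]
  refine ⟨fun h => ?_, ?_⟩
  · have hvi : v ≤ i := by
      by_contra hvi
      exact h (if_neg hvi)
    rw [if_pos hvi] at h
    exact ⟨i - v, h, Nat.sub_add_cancel hvi⟩
  · rintro ⟨j, hj, rfl⟩
    rwa [if_pos (Nat.le_add_left v j), Nat.add_sub_cancel]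

lemma suppZ_eq_image (S : Finset ℕ) : suppZ S = Nat.cast '' (S : Set ℕ) := rfl

lemma suppZ_support_X_pow_mul {R : Type*} [Semiring R] (v : ℕ) (f : R[X]) :
    suppZ (X ^ v * f).support = (fun i => i + (v : ℤ)) '' suppZ f.support := by
  rw [support_X_pow_mul, suppZ_eq_image, suppZ_eq_image, Finset.coe_map, Set.image_image,
    Set.image_image]
  exact Set.image_congr fun i _ => Nat.cast_add i v

lemma suppZ_support_conjReverse {R : Type*} [CommRing R] [StarRing R] (f : R[X]) :
    suppZ (conjReverse f).support = (fun i => (f.natDegree : ℤ) - i) '' suppZ f.support := by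
  rw [support_conjReverse, suppZ_eq_image, suppZ_eq_image, Finset.coe_image, Set.image_image,
    Set.image_image]
  refine Set.image_congr fun i hi => ?_
  have hi := le_natDegree_of_mem_supp i hi
  rw [revAt_le hi, Nat.cast_sub hi]

variable {K L : Type*} [Field K] [Field L] [IsAlgClosed L] [StarRing L] [Algebra K L] {P Q : L[X]}

lemma isShiftOrReflection_of_mul_conjReverse_eq (hP0 : P.coeff 0 ≠ 0) (hQ0 : Q.coeff 0 ≠ 0)
    (hP : ConjAlgebraicIndependent K fun i : P.support => P.coeff i)
    (h : P * conjReverse P = Q * conjReverse Q) (hcard : Q.support.card ≤ P.support.card) :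
    IsShiftOrReflection (suppZ P.support) (suppZ Q.support) := by
  obtain ⟨A, B, u, hA, hu, rfl, rfl⟩ := exists_monic_factor_of_mul_conjReverse_eq hP0 hQ0 h
  rw [support_C_mul_of_ne_zero hu] at hcard ⊢
  by_cases hA0 : A.natDegree = 0
  · obtain rfl := eq_one_of_monic_natDegree_zero hA hA0
    rw [one_mul, one_mul]
    exact Or.inr ⟨_, suppZ_support_conjReverse B⟩
  · exact .of_eq (congrArg suppZ (support_mul_conjReverse_eq hA hA0 hP0 hP hcard))

theorem isShiftOrReflection_of_X_pow_mul_eq (hP0 : P ≠ 0) (hQ0 : Q ≠ 0)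
    (hP : ConjAlgebraicIndependent K fun i : P.support => P.coeff i) {i j : ℕ}
    (h : X ^ i * (P * conjReverse P) = X ^ j * (Q * conjReverse Q))
    (hcard : Q.support.card ≤ P.support.card) :
    IsShiftOrReflection (suppZ P.support) (suppZ Q.support) := by
  obtain ⟨v, p, rfl, hp⟩ := exists_eq_X_pow_mul_coeff_zero_ne_zero hP0
  obtain ⟨w, q, rfl, hq⟩ := exists_eq_X_pow_mul_coeff_zero_ne_zero hQ0
  rw [suppZ_support_X_pow_mul, suppZ_support_X_pow_mul]
  refine (isShiftOrReflection_of_mul_conjReverse_eq (K := K) hp hq ?_ ?_ ?_).image_add_right v w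
  · have hmem (i : p.support) : (i : ℕ) + v ∈ (X ^ v * p).support := by
      rw [support_X_pow_mul]
      exact Finset.mem_map_of_mem _ i.2
    have hcomp := hP.comp (f := fun i : p.support => ⟨i + v, hmem i⟩)
      fun i j hij => Subtype.ext (Nat.add_right_cancel (Subtype.ext_iff.1 hij))
    simpa only [Function.comp_def, coeff_X_pow_mul] using hcomp
  · rw [conjReverse_X_pow_mul, conjReverse_X_pow_mul, mul_assoc, mul_assoc, ← mul_assoc (X ^ i),
      ← mul_assoc (X ^ j), ← pow_add, ← pow_add] at h
    refine eq_of_X_pow_mul_eq ?_ ?_ h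
    · rw [mul_coeff_zero]
      exact mul_ne_zero hp (coeff_zero_conjReverse_ne_zero (right_ne_zero_of_mul hP0))
    · rw [mul_coeff_zero]
      exact mul_ne_zero hq (coeff_zero_conjReverse_ne_zero (right_ne_zero_of_mul hQ0))
  · rwa [support_X_pow_mul, support_X_pow_mul, Finset.card_map, Finset.card_map] at hcard

end SupportRecovery

section ConjReflect

variable {R : Type*} [CommRing R] [StarRing R] {f g : R[X]} {N O : ℕ}

/-- The polynomial `z ^ N * conj (f (1 / conj z))`, for `f` of degree at most `N`: unlike
`conjReverse f`, it reverses the coefficients of `f` within a fixed window. -/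
noncomputable def conjReflect (N : ℕ) (f : R[X]) : R[X] :=
  reflect N (f.map (starRingEnd R))

lemma coeff_conjReflect (N : ℕ) (f : R[X]) (i : ℕ) :
    (conjReflect N f).coeff i = star (f.coeff (revAt N i)) := by
  rw [conjReflect, coeff_reflect, coeff_map, starRingEnd_apply]

lemma conjReflect_conjReflect : conjReflect N (conjReflect N f) = f := by
  ext i
  rw [coeff_conjReflect, coeff_conjReflect, revAt_invol, star_star]

lemma natDegree_conjReflect_le (hf : f.natDegree ≤ N) : (conjReflect N f).natDegree ≤ N :=
  natDegree_reflect_le.trans (max_le le_rfl (natDegree_map_le.trans hf))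

lemma conjReflect_mul (hf : f.natDegree ≤ N) (hg : g.natDegree ≤ O) :
    conjReflect (N + O) (f * g) = conjReflect N f * conjReflect O g := by
  rw [conjReflect, Polynomial.map_mul,
    reflect_mul _ _ (natDegree_map_le.trans hf) (natDegree_map_le.trans hg), conjReflect,
    conjReflect]

lemma conjReflect_eq_X_pow_mul_conjReverse (hf : f.natDegree ≤ N) :
    conjReflect N f = X ^ (N - f.natDegree) * conjReverse f := by
  have h := reflect_mul 1 (f.map (starRingEnd R)) (F := N - f.natDegree) (natDegree_one.trans_le
    (Nat.zero_le _)) le_rfl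
  rw [one_mul, reflect_one, natDegree_map_starRingEnd, Nat.sub_add_cancel hf] at h
  rw [conjReflect, h, conjReverse, reverse, natDegree_map_starRingEnd]

lemma eq_of_conjReflect_eq_self (hf : conjReflect (N + N) f = f) (hg : conjReflect (N + N) g = g)
    (hfN : f.natDegree ≤ N + N) (hgN : g.natDegree ≤ N + N)
    (h : ∀ i ≤ N, f.coeff i = g.coeff i) : f = g := by
  refine (ext_iff_natDegree_le hfN hgN).2 fun i hi => ?_
  rcases le_total i N with hiN | hiN
  · exact h i hiN
  · rw [← hf, ← hg, coeff_conjReflect, coeff_conjReflect, revAt_le hi, h _ (by omega)]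

end ConjReflect

section Signals

variable {n : ℕ} (x y : Fin n → ℂ)

lemma coeff_ofFn (i : ℕ) : (ofFn n x).coeff i = extZ x i := by
  by_cases hi : i < n
  · rw [ofFn_coeff_eq_val_of_lt x hi, extZ, dif_pos ⟨by omega, by omega⟩]
    rfl
  · rw [ofFn_coeff_eq_zero_of_ge x (not_lt.1 hi), extZ, dif_neg (by omega)]

lemma suppZ_support_ofFn : suppZ (ofFn n x).support = {j | extZ x j ≠ 0} := by
  ext j
  simp only [suppZ, mem_support_iff, coeff_ofFn, Set.mem_ofPred_eq]
  refine ⟨fun ⟨_, hi, hij⟩ => hij ▸ hi, fun hj => ?_⟩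
  lift j to ℕ using not_lt.1 fun hj0 => hj (dif_neg fun h => hj0.not_ge h.1)
  exact ⟨j, hj, rfl⟩

lemma support_ofFn : (ofFn n x).support = {i | x i ≠ 0}.toFinset.map Fin.valEmbedding := by
  ext i
  simp only [mem_support_iff, Finset.mem_map, Set.mem_toFinset, Set.mem_ofPred_eq,
    Fin.valEmbedding_apply]
  by_cases hi : i < n
  · rw [ofFn_coeff_eq_val_of_lt x hi]
    exact ⟨fun h => ⟨_, h, rfl⟩, by rintro ⟨j, hj, rfl⟩; exact hj⟩
  · rw [ofFn_coeff_eq_zero_of_ge x (not_lt.1 hi)]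
    exact ⟨fun h => (h rfl).elim, by rintro ⟨j, -, rfl⟩; exact (hi j.2).elim⟩

lemma card_support_ofFn : (ofFn n x).support.card = {i | x i ≠ 0}.ncard := by
  rw [support_ofFn, Finset.card_map, Set.ncard_eq_toFinset_card']

lemma natDegree_ofFn_le : (ofFn n x).natDegree ≤ n - 1 :=
  natDegree_le_iff_coeff_eq_zero.2 fun _ hi => ofFn_coeff_eq_zero_of_ge x (by omega)

lemma coeff_ofFn_mul_conjReflect (m : Fin n) :
    (ofFn n x * conjReflect (n - 1) (ofFn n x)).coeff (n - 1 - m) = autocorr x m := by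
  rw [coeff_mul, Finset.Nat.sum_antidiagonal_eq_sum_range_succ_mk, autocorr,
    show (n - 1 - m).succ = n - m by omega]
  refine Finset.sum_congr rfl fun j hj => ?_
  have hj := Finset.mem_range.1 hj
  rw [coeff_conjReflect, revAt_le (by omega), coeff_ofFn, coeff_ofFn, starRingEnd_apply,
    show ((n - 1 - (n - 1 - m - j) : ℕ) : ℤ) = j + m by omega]

variable {x y}

lemma mul_conjReflect_eq_of_autocorr_eq (h : ∀ m : Fin n, autocorr x m = autocorr y m) :
    ofFn n x * conjReflect (n - 1) (ofFn n x) = ofFn n y * conjReflect (n - 1) (ofFn n y) := by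
  have hself (z : Fin n → ℂ) : conjReflect (n - 1 + (n - 1))
      (ofFn n z * conjReflect (n - 1) (ofFn n z)) =
      ofFn n z * conjReflect (n - 1) (ofFn n z) := by
    rw [conjReflect_mul (natDegree_ofFn_le z) (natDegree_conjReflect_le (natDegree_ofFn_le z)),
      conjReflect_conjReflect, mul_comm]
  have hdeg (z : Fin n → ℂ) :
      (ofFn n z * conjReflect (n - 1) (ofFn n z)).natDegree ≤ n - 1 + (n - 1) :=
    natDegree_mul_le_of_le (natDegree_ofFn_le z) (natDegree_conjReflect_le (natDegree_ofFn_le z))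
  rcases n.eq_zero_or_pos with rfl | hn
  · rw [Subsingleton.elim x y]
  refine eq_of_conjReflect_eq_self (hself x) (hself y) (hdeg x) (hdeg y) fun i hi => ?_
  have hm := h ⟨n - 1 - i, by omega⟩
  rwa [← coeff_ofFn_mul_conjReflect, ← coeff_ofFn_mul_conjReflect, Nat.sub_sub_self hi] at hm

end Signals

section GenericValues

-- By Fubini, for almost every ratio `t` the preimage of `s` under the homothety `t` is null.
lemma addHaar_eq_zero_of_ae_lineMap_notMem {E : Type*} [NormedAddCommGroup E] [NormedSpace ℝ E]
    [FiniteDimensional ℝ E] [MeasurableSpace E] [BorelSpace E] (μ : Measure E)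
    [μ.IsAddHaarMeasure] {s : Set E} (hs : MeasurableSet s) (a : E)
    (h : ∀ x, ∀ᵐ t : ℝ, AffineMap.lineMap a x t ∉ s) : μ s = 0 := by
  have hmeas : MeasurableSet {p : E × ℝ | AffineMap.lineMap a p.1 p.2 ∉ s} :=
    hs.compl.preimage (by fun_prop)
  have hswap : ∀ᵐ t : ℝ, ∀ᵐ x ∂μ, AffineMap.lineMap a x t ∉ s :=
    (Measure.ae_ae_comm hmeas).1 (.of_forall h)
  obtain ⟨t, ht, ht0⟩ := (hswap.and (Measure.ae_ne volume 0)).exists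
  have himage : AffineMap.homothety a t '' (AffineMap.homothety a t ⁻¹' s) = s :=
    Set.image_preimage_eq s
      (AffineEquiv.homothetyUnitsMulHom a (Units.mk0 t ht0)).surjective
  have hnull : μ (AffineMap.homothety a t ⁻¹' s) = 0 := measure_eq_zero_iff_ae_notMem.2 ht
  rw [← himage, Measure.addHaar_image_homothety, hnull, mul_zero]

lemma ae_ofReal_eval_ne_zero {p : ℂ[X]} (hp : p ≠ 0) : ∀ᵐ t : ℝ, p.eval (t : ℂ) ≠ 0 := by
  have hfin : {t : ℝ | p.eval (t : ℂ) = 0}.Finite :=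
    (finite_setOfPred_isRoot hp).preimage Complex.ofReal_injective.injOn
  exact measure_eq_zero_iff_ae_notMem.1 (hfin.measure_zero _)

variable {ι : Type*}

-- Substituting `z + I w` and `z - I w` for a variable and its conjugate gives a polynomial that
-- vanishes at all real points, and the substitution is invertible.
lemma mvPolynomial_eq_zero_of_eval_conj_eq_zero (p : MvPolynomial (ι ⊕ ι) ℂ)
    (h : ∀ c : ι → ℂ, MvPolynomial.eval (Sum.elim c (star ∘ c)) p = 0) : p = 0 := by
  set g : ι ⊕ ι → MvPolynomial (ι ⊕ ι) ℂ := Sum.elim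
    (fun i => MvPolynomial.X (Sum.inl i) + MvPolynomial.C Complex.I * MvPolynomial.X (Sum.inr i))
    (fun i => MvPolynomial.X (Sum.inl i) - MvPolynomial.C Complex.I * MvPolynomial.X (Sum.inr i))
  have heval (x : ι ⊕ ι → ℂ) : MvPolynomial.eval x (MvPolynomial.bind₁ g p) =
      MvPolynomial.eval (Sum.elim (fun i => x (Sum.inl i) + Complex.I * x (Sum.inr i))
        fun i => x (Sum.inl i) - Complex.I * x (Sum.inr i)) p := by
    rw [← MvPolynomial.coe_aeval_eq_eval, RingHom.coe_coe, MvPolynomial.aeval_bind₁,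
      ← MvPolynomial.coe_aeval_eq_eval, RingHom.coe_coe]
    congr 2
    ext (i | i) <;> simp [g]
  have hbind : MvPolynomial.bind₁ g p = 0 := by
    refine MvPolynomial.funext_set (fun _ => Set.range Complex.ofReal)
      (fun _ => Set.infinite_range_of_injective Complex.ofReal_injective) fun x hx => ?_
    choose r hr using fun i => hx i (Set.mem_univ i)
    obtain rfl : (fun i => (r i : ℂ)) = x := funext hr
    rw [heval, map_zero, ← h fun i => r (Sum.inl i) + Complex.I * r (Sum.inr i)]
    congr 2
    ext (i | i) <;> simp [sub_eq_add_neg]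
  refine MvPolynomial.funext fun y => ?_
  have hy := heval (Sum.elim (fun i => (y (Sum.inl i) + y (Sum.inr i)) / 2)
    fun i => (y (Sum.inl i) - y (Sum.inr i)) / (2 * Complex.I))
  rw [hbind, map_zero] at hy
  rw [map_zero, hy]
  congr 2
  ext (i | i) <;> simp only [Sum.elim_inl, Sum.elim_inr] <;> field_simp <;> ring

variable [Fintype ι]

lemma ae_eval_conj_ne_zero {p : MvPolynomial (ι ⊕ ι) ℂ} (hp : p ≠ 0) :
    ∀ᵐ c : ι → ℂ, MvPolynomial.eval (Sum.elim c (star ∘ c)) p ≠ 0 := by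
  obtain ⟨a, ha⟩ := not_forall.1 fun h => hp (mvPolynomial_eq_zero_of_eval_conj_eq_zero p h)
  have hcont : Continuous fun c : ι → ℂ => MvPolynomial.eval (Sum.elim c (star ∘ c)) p :=
    p.continuous_eval.comp <| continuous_pi <| Sum.rec (fun i => continuous_apply i)
      fun i => (continuous_apply i).star
  refine measure_eq_zero_iff_ae_notMem.1 <| addHaar_eq_zero_of_ae_lineMap_notMem volume
    (isClosed_eq hcont continuous_const).measurableSet a fun x => ?_
  set q : ℂ[X] := MvPolynomial.aeval (Sum.elim (fun i => C (a i) + X * C (x i - a i))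
    fun i => C (star (a i)) + X * C (star (x i) - star (a i))) p
  have hq (t : ℝ) : q.eval (t : ℂ) = MvPolynomial.eval
      (Sum.elim (AffineMap.lineMap a x t) (star ∘ (AffineMap.lineMap a x t : ι → ℂ))) p := by
    rw [← coe_aeval_eq_eval, MvPolynomial.comp_aeval_apply,
      ← MvPolynomial.coe_aeval_eq_eval, RingHom.coe_coe]
    congr 2
    ext (i | i) <;> simp [AffineMap.lineMap_apply, add_comm]
  have hq0 : q ≠ 0 := fun h0 => ha <| by
    simpa only [h0, eval_zero, AffineMap.lineMap_apply_zero] using (hq 0).symm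
  filter_upwards [ae_ofReal_eval_ne_zero hq0] with t ht h0
  exact ht ((hq t).trans h0)

theorem ae_conjAlgebraicIndependent (K : Type*) [Field K] [Countable K] [Algebra K ℂ] :
    ∀ᵐ c : ι → ℂ, ConjAlgebraicIndependent K c := by
  have : Countable (MvPolynomial (ι ⊕ ι) K) := by
    refine Cardinal.mk_le_aleph0_iff.1 (MvPolynomial.cardinalMk_le_max_lift.trans ?_)
    simp
  have hinj := MvPolynomial.map_injective (σ := ι ⊕ ι) _ (algebraMap K ℂ).injective
  have hall : ∀ᵐ c : ι → ℂ, ∀ p : MvPolynomial (ι ⊕ ι) K, p ≠ 0 →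
      MvPolynomial.aeval (Sum.elim c (star ∘ c)) p ≠ 0 := by
    refine ae_all_iff.2 fun p => Filter.eventually_imp_distrib_left.2 fun hp => ?_
    filter_upwards [ae_eval_conj_ne_zero ((map_ne_zero_iff _ hinj).2 hp)] with c hc
    rwa [← MvPolynomial.coe_aeval_eq_eval, RingHom.coe_coe,
      MvPolynomial.aeval_map_algebraMap] at hc
  filter_upwards [hall] with c hc
  exact algebraicIndependent_iff.2 fun p => not_imp_not.1 (hc p)

end GenericValues

section AlmostEverywhere

variable {n : ℕ} {S : Finset ℕ}

lemma coeff_ofFn_sigOn (hSn : ∀ i ∈ S, i < n) (c : ↥S → ℂ) (i : S) :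
    (ofFn n (sigOn S c)).coeff i = c i := by
  rw [ofFn_coeff_eq_val_of_lt _ (hSn i i.2), sigOn, dif_pos i.2]

lemma support_ofFn_sigOn (hSn : ∀ i ∈ S, i < n) {c : ↥S → ℂ} (hc : ∀ i, c i ≠ 0) :
    (ofFn n (sigOn S c)).support = S := by
  ext i
  refine mem_support_iff.trans ⟨fun hi => ?_, fun hi => ?_⟩
  · by_contra hiS
    refine hi ?_
    by_cases hin : i < n
    · rw [ofFn_coeff_eq_val_of_lt _ hin, sigOn, dif_neg hiS]
    · exact ofFn_coeff_eq_zero_of_ge _ (not_lt.1 hin)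
  · exact (coeff_ofFn_sigOn hSn c ⟨i, hi⟩).trans_ne (hc _)

lemma conjAlgebraicIndependent_coeff_ofFn_sigOn {K : Type*} [Field K] [Algebra K ℂ]
    (hSn : ∀ i ∈ S, i < n) {c : ↥S → ℂ} (hc : ConjAlgebraicIndependent K c) :
    ConjAlgebraicIndependent K
      fun i : (ofFn n (sigOn S c)).support => (ofFn n (sigOn S c)).coeff i := by
  have hsupp := support_ofFn_sigOn hSn hc.algebraicIndependent.ne_zero
  have hcomp := hc.comp (f := fun i : (ofFn n (sigOn S c)).support => ⟨i, hsupp.subset i.2⟩)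
    fun _ _ hij => Subtype.ext (congrArg Subtype.val hij :)
  simpa only [Function.comp_def, ← coeff_ofFn_sigOn hSn] using hcomp

lemma isShiftOrReflection_of_autocorr_eq {K : Type*} [Field K] [Algebra K ℂ] {x y : Fin n → ℂ}
    (hx : ConjAlgebraicIndependent K fun i : (ofFn n x).support => (ofFn n x).coeff i)
    (hcard : {i | y i ≠ 0}.ncard ≤ {i | x i ≠ 0}.ncard)
    (h : ∀ m : Fin n, autocorr y m = autocorr x m) :
    IsShiftOrReflection {j | extZ x j ≠ 0} {j | extZ y j ≠ 0} := by
  rw [← suppZ_support_ofFn, ← suppZ_support_ofFn]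
  rw [← card_support_ofFn, ← card_support_ofFn] at hcard
  have hmul := (mul_conjReflect_eq_of_autocorr_eq h).symm
  rw [conjReflect_eq_X_pow_mul_conjReverse (natDegree_ofFn_le x),
    conjReflect_eq_X_pow_mul_conjReverse (natDegree_ofFn_le y), mul_left_comm,
    mul_left_comm (ofFn n y)] at hmul
  rcases eq_or_ne (ofFn n x) 0 with hx0 | hx0
  · rw [hx0, support_zero, Finset.card_empty, Nat.le_zero, card_support_eq_zero] at hcard
    exact .of_eq (by rw [hcard, hx0])
  have hy0 : ofFn n y ≠ 0 := fun hy0 => by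
    rw [hy0, zero_mul, mul_zero] at hmul
    exact mul_ne_zero (pow_ne_zero _ X_ne_zero) (mul_ne_zero hx0 (conjReverse_ne_zero hx0)) hmul
  exact isShiftOrReflection_of_X_pow_mul_eq hx0 hy0 hx hmul hcard

theorem support_recovery_almost_always_general (n : ℕ) (S : Finset ℕ) (hSn : ∀ i ∈ S, i < n) :
    ∀ᵐ c : ↥S → ℂ, ∀ x' : Fin n → ℂ, {i | x' i ≠ 0}.ncard ≤ S.card →
      (∀ m : Fin n, autocorr x' m = autocorr (sigOn (n := n) S c) m) →
      IsShiftOrReflection (suppZ S) {j | extZ x' j ≠ 0} := by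
  filter_upwards [ae_conjAlgebraicIndependent ℚ] with c hc x' hcard h
  have hsupp := support_ofFn_sigOn hSn hc.algebraicIndependent.ne_zero
  have hncard : {i | sigOn (n := n) S c i ≠ 0}.ncard = S.card := by
    rw [← card_support_ofFn, hsupp]
  rw [← congrArg suppZ hsupp, suppZ_support_ofFn]
  exact isShiftOrReflection_of_autocorr_eq
    (conjAlgebraicIndependent_coeff_ofFn_sigOn hSn hc) (hcard.trans_eq hncard.symm) h

end AlmostEverywhere

/-- Let `S ⊆ {0,…,n−1}` with `|S| = k`, `3 ≤ k ≤ n−1`.  For (Lebesgue-) almost all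
nonvanishing value assignments `c ∈ (ℂ\{0})^S`, every signal with at most `k` nonzero
entries and the same autocorrelation as `x(c)` has support equal to a shift `S + m` or a
shifted reflection `m − S` of `S`. -/
theorem support_recovery_almost_always
    (n k : ℕ) (hn : 4 ≤ n) (hk3 : 3 ≤ k) (hkn : k ≤ n - 1)
    (S : Finset ℕ) (hScard : S.card = k) (hSn : ∀ i ∈ S, i < n) :
    volume {c : ↥S → ℂ |
      (∀ i, c i ≠ 0) ∧
      ∃ x' : Fin n → ℂ, {i : Fin n | x' i ≠ 0}.ncard ≤ k ∧
        (∀ m : Fin n, autocorr x' (m : ℕ) = autocorr (sigOn (n := n) S c) (m : ℕ)) ∧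
        (∀ m : ℤ, {j : ℤ | extZ x' j ≠ 0} ≠ (fun i : ℤ => i + m) '' suppZ S) ∧
        (∀ m : ℤ, {j : ℤ | extZ x' j ≠ 0} ≠ (fun i : ℤ => m - i) '' suppZ S)} = 0 := by
  subst hScard
  exact measure_eq_zero_iff_ae_notMem.2 <|
    (support_recovery_almost_always_general n S hSn).mono
      fun c hc ⟨_, x', hcard, h, hshift, hrefl⟩ =>
        (hc x' hcard h).elim (fun ⟨m, hm⟩ => hshift m hm) fun ⟨m, hm⟩ => hrefl m hm
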